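/- Let k be a field of characteristic ≠ 2, (W, B_W) a finite-dimensional vector space over k with a nondegenerate symmetric bilinear form, and let V = kp ⊕ kq ⊕ W carry the symmetric bilinear form B extending B_W with B(p,p) = B(q,q) = 0, B(p,q) = 1, and p, q orthogonal to W. For c ∈ k^× let c̃ be the linear map of V with c̃ p = c p, c̃ q = c⁻¹ q, and c̃ w = w for w ∈ W. Then: (i) an element g ∈ SO(V) satisfies g(k p) = k p if and only if g = c̃ ∘ h(t,R) for (necessarily unique) c ∈ k^×, t ∈ W, R ∈ SO(W); (ii) the multiplication law is (c̃ ∘ h(t,R)) ∘ (c̃' ∘ h(t',R')) = (cc')~ ∘ h(c'⁻¹ t + R t', RR'). Consequently the stabilizer of the line kp in SO(V) is isomorphic as a group to W ⋊ (SO(W) × k^×). -/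

import Mathlib

namespace ConformalModel

variable {k W : Type*} [Field k] [AddCommGroup W] [Module k W]

/-- The bilinear form on `V = kp ⊕ kq ⊕ W`, realized as `k × k × W` with `p = (1,0,0)` and
`q = (0,1,0)`: `B((a,b,w),(a',b',w')) = a b' + b a' + B_W(w,w')`. -/
def Bext (BW : LinearMap.BilinForm k W) : LinearMap.BilinForm k (k × k × W) :=
  LinearMap.mk₂ k (fun x y => x.1 * y.2.1 + x.2.1 * y.1 + BW x.2.2 y.2.2)
    (by intro m₁ m₂ n; simp; ring)
    (by intro c m n; simp; ring)
    (by intro m n₁ n₂; simp; ring)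
    (by intro c m n; simp; ring)

/-- The distinguished null vector `p`. -/
def pVec : k × k × W := (1, 0, 0)

/-- The linear map `h(t,R)` of `V = kp ⊕ kq ⊕ W`, determined by `h(t,R)p = p`,
`h(t,R)q = −(B(t,t)/2)p + q + t`, `h(t,R)w = −B(t,Rw)p + Rw`. -/
def hMap (BW : LinearMap.BilinForm k W) (t : W) (R : W →ₗ[k] W) :
    (k × k × W) →ₗ[k] (k × k × W) where
  toFun x := (x.1 - x.2.1 * (BW t t / 2) - BW t (R x.2.2), x.2.1, x.2.1 • t + R x.2.2)
  map_add' x y := by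
    refine Prod.ext ?_ (Prod.ext ?_ ?_)
    · simp; ring
    · simp
    · simp [add_smul]; abel
  map_smul' c x := by
    refine Prod.ext ?_ (Prod.ext ?_ ?_)
    · simp; ring
    · simp
    · simp [mul_smul, smul_add]

/-- The dilation `c̃` with `c̃ p = c p`, `c̃ q = c⁻¹ q`, `c̃ w = w`. -/
def cTilde (c : k) : (k × k × W) →ₗ[k] (k × k × W) where
  toFun x := (c * x.1, c⁻¹ * x.2.1, x.2.2)
  map_add' x y := by
    refine Prod.ext ?_ (Prod.ext ?_ ?_) <;> simp <;> ring
  map_smul' r x := by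
    refine Prod.ext ?_ (Prod.ext ?_ ?_) <;> simp <;> ring

/-- The section `J₀ : W → V`, `J₀(w) = −(B(w,w)/2)p + q + w`. -/
def J0 (BW : LinearMap.BilinForm k W) (w : W) : k × k × W := (-(BW w w / 2), 1, w)

/-- Membership in the special orthogonal group of a bilinear form, for a linear
endomorphism: it is bijective, preserves the form, and has determinant 1. -/
def IsSO {V : Type*} [AddCommGroup V] [Module k V] (B : LinearMap.BilinForm k V)
    (g : V →ₗ[k] V) : Prop :=
  Function.Bijective g ∧ (∀ x y, B (g x) (g y) = B x y) ∧ LinearMap.det g = 1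

/-!
Pairing with `p` reads off the `q`-coordinate, so an isometry `g` with `g p = c p` scales
`q`-coordinates by `c⁻¹`; in particular it preserves `p^⊥ = kp ⊕ W` and induces an isometry `R` of
`p^⊥ / kp ≅ W`. If `t` is the `W`-component of `g q`, then the `p`-components of `g q` and `g w` are
forced by `B(gq, gq) = 0` and `B(gq, gw) = 0`, which gives `g = c̃ ∘ h(t,R)`. As `c̃` and `h(t,1)`
have determinant one (the latter is a product of two transvections), `det g = det R`. The
multiplication law follows from `h(t,R) ∘ c̃ = c̃ ∘ h(c⁻¹t,R)` and
`h(t,R) ∘ h(t',R') = h(t + Rt',RR')`.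
-/

theorem Bext_apply (BW : LinearMap.BilinForm k W) (x y : k × k × W) :
    Bext BW x y = x.1 * y.2.1 + x.2.1 * y.1 + BW x.2.2 y.2.2 :=
  rfl

theorem cTilde_apply (c : k) (x : k × k × W) : cTilde c x = (c * x.1, c⁻¹ * x.2.1, x.2.2) :=
  rfl

theorem hMap_apply (BW : LinearMap.BilinForm k W) (t : W) (R : W →ₗ[k] W) (x : k × k × W) :
    hMap BW t R x =
      (x.1 - x.2.1 * (BW t t / 2) - BW t (R x.2.2), x.2.1, x.2.1 • t + R x.2.2) :=
  rfl

theorem Bext_pVec_left (BW : LinearMap.BilinForm k W) (x : k × k × W) :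
    Bext BW pVec x = x.2.1 := by
  simp [Bext_apply, pVec]

section MultiplicationLaw

variable {BW : LinearMap.BilinForm k W}

theorem cTilde_comp_cTilde (c c' : k) :
    (cTilde c ∘ₗ cTilde c' : (k × k × W) →ₗ[k] (k × k × W)) = cTilde (c * c') := by
  ext <;> simp [cTilde_apply, mul_comm]

theorem hMap_comp_cTilde {c : k} (hc : c ≠ 0) (t : W) (R : W →ₗ[k] W) :
    hMap BW t R ∘ₗ cTilde c = cTilde c ∘ₗ hMap BW (c⁻¹ • t) R := by
  refine LinearMap.ext fun x => Prod.ext ?_ (Prod.ext rfl ?_)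
  · simp only [LinearMap.comp_apply, cTilde_apply, hMap_apply, map_smul, LinearMap.smul_apply,
      smul_eq_mul]
    field_simp
  · simp [cTilde_apply, hMap_apply, smul_smul, mul_comm]

theorem hMap_comp_hMap (hchar : (2 : k) ≠ 0) (hsymm : ∀ x y, BW x y = BW y x)
    {R : W →ₗ[k] W} (hR : ∀ x y, BW (R x) (R y) = BW x y) (t t' : W) (R' : W →ₗ[k] W) :
    hMap BW t R ∘ₗ hMap BW t' R' = hMap BW (t + R t') (R ∘ₗ R') := by
  refine LinearMap.ext fun x => Prod.ext ?_ (Prod.ext rfl ?_)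
  · simp only [LinearMap.comp_apply, hMap_apply, map_add, map_smul, LinearMap.add_apply,
      smul_eq_mul, hR, hsymm (R t') t]
    field_simp
    ring
  · simp [hMap_apply, add_assoc]

theorem cTilde_comp_hMap_comp_cTilde_comp_hMap (hchar : (2 : k) ≠ 0)
    (hsymm : ∀ x y, BW x y = BW y x) (c : k) {c' : k} (hc' : c' ≠ 0)
    {R : W →ₗ[k] W} (hR : ∀ x y, BW (R x) (R y) = BW x y) (t t' : W) (R' : W →ₗ[k] W) :
    (cTilde c ∘ₗ hMap BW t R) ∘ₗ (cTilde c' ∘ₗ hMap BW t' R') =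
      cTilde (c * c') ∘ₗ hMap BW (c'⁻¹ • t + R t') (R ∘ₗ R') :=
  calc
    _ = cTilde c ∘ₗ (hMap BW t R ∘ₗ cTilde c') ∘ₗ hMap BW t' R' := by
      simp only [LinearMap.comp_assoc]
    _ = (cTilde c ∘ₗ cTilde c') ∘ₗ (hMap BW (c'⁻¹ • t) R ∘ₗ hMap BW t' R') := by
      simp only [hMap_comp_cTilde hc', LinearMap.comp_assoc]
    _ = _ := by rw [cTilde_comp_cTilde, hMap_comp_hMap hchar hsymm hR]

end MultiplicationLaw

section Determinant

variable [FiniteDimensional k W]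

theorem det_cTilde {c : k} (hc : c ≠ 0) :
    LinearMap.det (cTilde c : (k × k × W) →ₗ[k] (k × k × W)) = 1 := by
  have cTilde_eq_prodMap : (cTilde c : (k × k × W) →ₗ[k] (k × k × W)) =
      (c • LinearMap.id).prodMap ((c⁻¹ • LinearMap.id).prodMap LinearMap.id) := rfl
  rw [cTilde_eq_prodMap, LinearMap.det_prodMap, LinearMap.det_prodMap]
  simp [hc]

theorem det_hMap_id (BW : LinearMap.BilinForm k W) (t : W) :
    LinearMap.det (hMap BW t LinearMap.id) = 1 := by
  let qCoord : Module.Dual k (k × k × W) := LinearMap.fst k k W ∘ₗ LinearMap.snd k k (k × W)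
  let wCoord : (k × k × W) →ₗ[k] W := LinearMap.snd k k W ∘ₗ LinearMap.snd k k (k × W)
  have hMap_eq_transvections : hMap BW t LinearMap.id =
      LinearMap.transvection qCoord (0, 0, t) ∘ₗ
        LinearMap.transvection (-((BW t t / 2) • qCoord) - BW t ∘ₗ wCoord) pVec := by
    refine LinearMap.ext fun x => Prod.ext ?_ (Prod.ext ?_ ?_)
    · simp only [hMap_apply, LinearMap.comp_apply, LinearMap.transvection.apply, qCoord, wCoord,
        pVec, LinearMap.sub_apply, LinearMap.neg_apply, LinearMap.smul_apply, Prod.fst_add,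
        Prod.smul_fst, LinearMap.fst_apply, LinearMap.snd_apply, LinearMap.id_apply, smul_eq_mul]
      ring
    · simp [hMap_apply, LinearMap.transvection.apply, qCoord, pVec]
    · simp [hMap_apply, LinearMap.transvection.apply, qCoord, pVec, add_comm]
  rw [hMap_eq_transvections, LinearMap.det_comp, LinearMap.transvection.det,
    LinearMap.transvection.det]
  simp [qCoord, wCoord, pVec]

theorem det_hMap (BW : LinearMap.BilinForm k W) (t : W) (R : W →ₗ[k] W) :
    LinearMap.det (hMap BW t R) = LinearMap.det R := by
  have hMap_eq_comp_prodMap : hMap BW t R =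
      hMap BW t LinearMap.id ∘ₗ LinearMap.id.prodMap (LinearMap.id.prodMap R) := rfl
  rw [hMap_eq_comp_prodMap, LinearMap.det_comp, det_hMap_id, LinearMap.det_prodMap,
    LinearMap.det_prodMap]
  simp

theorem isSO_of_isometry_of_det_eq_one {B : LinearMap.BilinForm k W} {g : W →ₗ[k] W}
    (hB : ∀ x y, B (g x) (g y) = B x y) (hdet : LinearMap.det g = 1) : IsSO B g := by
  have g_isUnit : IsUnit g := (LinearMap.isUnit_iff_isUnit_det g).2 (hdet ▸ isUnit_one)
  exact ⟨(Module.End.isUnit_iff g).1 g_isUnit, hB, hdet⟩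

end Determinant

section Components

/-- The `W`-component of `g q`, which recovers `t` from `c̃ ∘ h(t,R)`. -/
def translationPart (g : (k × k × W) →ₗ[k] (k × k × W)) : W :=
  (g (0, 1, 0)).2.2

/-- The compression of `g` to `W`, which recovers `R` from `c̃ ∘ h(t,R)`. -/
def linearPart (g : (k × k × W) →ₗ[k] (k × k × W)) : W →ₗ[k] W :=
  LinearMap.snd k k W ∘ₗ LinearMap.snd k k (k × W) ∘ₗ g ∘ₗ
    LinearMap.inr k k (k × W) ∘ₗ LinearMap.inr k k W

theorem linearPart_apply (g : (k × k × W) →ₗ[k] (k × k × W)) (w : W) :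
    linearPart g w = (g (0, 0, w)).2.2 :=
  rfl

variable (BW : LinearMap.BilinForm k W)

theorem cTilde_comp_hMap_pVec (c : k) (t : W) (R : W →ₗ[k] W) :
    (cTilde c ∘ₗ hMap BW t R) pVec = c • pVec := by
  simp [cTilde_apply, hMap_apply, pVec]

theorem translationPart_cTilde_comp_hMap (c : k) (t : W) (R : W →ₗ[k] W) :
    translationPart (cTilde c ∘ₗ hMap BW t R) = t := by
  simp [translationPart, cTilde_apply, hMap_apply]

theorem linearPart_cTilde_comp_hMap (c : k) (t : W) (R : W →ₗ[k] W) :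
    linearPart (cTilde c ∘ₗ hMap BW t R) = R := by
  ext w
  simp [linearPart_apply, cTilde_apply, hMap_apply]

theorem eq_of_cTilde_comp_hMap_eq {c c' : k} {t t' : W} {R R' : W →ₗ[k] W}
    (h : cTilde c ∘ₗ hMap BW t R = cTilde c' ∘ₗ hMap BW t' R') :
    c = c' ∧ t = t' ∧ R = R' := by
  refine ⟨?_, ?_, ?_⟩
  · have smul_pVec_eq : c • (pVec : k × k × W) = c' • pVec := by
      rw [← cTilde_comp_hMap_pVec BW c t R, h, cTilde_comp_hMap_pVec]
    simpa [pVec] using smul_pVec_eq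
  · rw [← translationPart_cTilde_comp_hMap BW c t R, h, translationPart_cTilde_comp_hMap]
  · rw [← linearPart_cTilde_comp_hMap BW c t R, h, linearPart_cTilde_comp_hMap]

end Components

/-- `g` is an isometry of `V` that maps the null vector `p` to `c p`. -/
structure IsIsometryScalingP (BW : LinearMap.BilinForm k W)
    (g : (k × k × W) →ₗ[k] (k × k × W)) (c : k) : Prop where
  isometry : ∀ x y, Bext BW (g x) (g y) = Bext BW x y
  map_pVec : g pVec = c • pVec

namespace IsIsometryScalingP

variable {BW : LinearMap.BilinForm k W} {g : (k × k × W) →ₗ[k] (k × k × W)} {c : k}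

theorem mul_qCoord_map (hg : IsIsometryScalingP BW g c) (x : k × k × W) : c * (g x).2.1 = x.2.1 :=
  calc
    c * (g x).2.1 = Bext BW (c • pVec) (g x) := by
      rw [map_smul, LinearMap.smul_apply, Bext_pVec_left, smul_eq_mul]
    _ = x.2.1 := by rw [← hg.map_pVec, hg.isometry, Bext_pVec_left]

theorem eigenvalue_ne_zero (hg : IsIsometryScalingP BW g c) : c ≠ 0 :=
  left_ne_zero_of_mul_eq_one (hg.mul_qCoord_map (0, 1, 0))

theorem qCoord_map (hg : IsIsometryScalingP BW g c) (x : k × k × W) : (g x).2.1 = c⁻¹ * x.2.1 :=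
  (eq_inv_mul_iff_mul_eq₀ hg.eigenvalue_ne_zero).2 (hg.mul_qCoord_map x)

theorem linearPart_isometry (hg : IsIsometryScalingP BW g c) (x y : W) :
    BW (linearPart g x) (linearPart g y) = BW x y := by
  simpa [Bext_apply, hg.qCoord_map, ← linearPart_apply] using hg.isometry (0, 0, x) (0, 0, y)

theorem pCoord_map_q (hg : IsIsometryScalingP BW g c) (hchar : (2 : k) ≠ 0) :
    (g (0, 1, 0)).1 = -(c * (BW (translationPart g) (translationPart g) / 2)) := by
  have hc := hg.eigenvalue_ne_zero
  have g_q_isotropic :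
      (g (0, 1, 0)).1 * c⁻¹ + c⁻¹ * (g (0, 1, 0)).1 +
        BW (translationPart g) (translationPart g) = 0 := by
    simpa [Bext_apply, hg.qCoord_map, translationPart] using hg.isometry (0, 1, 0) (0, 1, 0)
  field_simp at g_q_isotropic ⊢
  linear_combination g_q_isotropic

theorem pCoord_map_w (hg : IsIsometryScalingP BW g c) (w : W) :
    (g (0, 0, w)).1 = -(c * BW (translationPart g) (linearPart g w)) := by
  have hc := hg.eigenvalue_ne_zero
  have g_q_orthogonal_g_w :
      c⁻¹ * (g (0, 0, w)).1 + BW (translationPart g) (linearPart g w) = 0 := by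
    simpa [Bext_apply, hg.qCoord_map, translationPart, linearPart_apply]
      using hg.isometry (0, 1, 0) (0, 0, w)
  field_simp at g_q_orthogonal_g_w
  linear_combination g_q_orthogonal_g_w

theorem eq_cTilde_comp_hMap (hg : IsIsometryScalingP BW g c) (hchar : (2 : k) ≠ 0) :
    g = cTilde c ∘ₗ hMap BW (translationPart g) (linearPart g) := by
  refine LinearMap.prod_ext ?_ (LinearMap.prod_ext ?_ ?_)
  · refine LinearMap.ext_ring ?_
    exact hg.map_pVec.trans (cTilde_comp_hMap_pVec BW c _ _).symm
  · refine LinearMap.ext_ring (Prod.ext ?_ (Prod.ext ?_ ?_))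
    · simp [cTilde_apply, hMap_apply, hg.pCoord_map_q hchar]
    · simp [cTilde_apply, hMap_apply, hg.qCoord_map]
    · simp [cTilde_apply, hMap_apply, translationPart]
  · refine LinearMap.ext fun w => Prod.ext ?_ (Prod.ext ?_ ?_)
    · simp [cTilde_apply, hMap_apply, hg.pCoord_map_w]
    · simp [cTilde_apply, hMap_apply, hg.qCoord_map]
    · simp [cTilde_apply, hMap_apply, linearPart_apply]

end IsIsometryScalingP

theorem map_pVec_mem_span_iff [FiniteDimensional k W] (hchar : (2 : k) ≠ 0)
    {BW : LinearMap.BilinForm k W} {g : (k × k × W) →ₗ[k] (k × k × W)} (hg : IsSO (Bext BW) g) :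
    g pVec ∈ Submodule.span k {(pVec : k × k × W)} ↔
      ∃ (c : k) (t : W) (R : W →ₗ[k] W), c ≠ 0 ∧ IsSO BW R ∧ g = cTilde c ∘ₗ hMap BW t R := by
  obtain ⟨-, hB, hdet⟩ := hg
  constructor
  · intro g_pVec_mem
    obtain ⟨c, hc⟩ := Submodule.mem_span_singleton.1 g_pVec_mem
    have g_scales_p : IsIsometryScalingP BW g c := ⟨hB, hc.symm⟩
    have c_ne_zero := g_scales_p.eigenvalue_ne_zero
    have g_eq := g_scales_p.eq_cTilde_comp_hMap hchar
    have det_linearPart : LinearMap.det (linearPart g) = 1 := by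
      rw [g_eq, LinearMap.det_comp, det_cTilde c_ne_zero, det_hMap, one_mul] at hdet
      exact hdet
    exact ⟨c, translationPart g, linearPart g, c_ne_zero,
      isSO_of_isometry_of_det_eq_one g_scales_p.linearPart_isometry det_linearPart, g_eq⟩
  · rintro ⟨c, t, R, -, -, rfl⟩
    exact Submodule.mem_span_singleton.2 ⟨c, (cTilde_comp_hMap_pVec BW c t R).symm⟩

theorem stmt_14_general {k W : Type*} [Field k] [AddCommGroup W] [Module k W]
    [FiniteDimensional k W] (hchar : (2 : k) ≠ 0)
    (BW : LinearMap.BilinForm k W)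
    (hsymm : ∀ x y, BW x y = BW y x) :
    (∀ g : (k × k × W) →ₗ[k] (k × k × W), IsSO (Bext BW) g →
      (g pVec ∈ Submodule.span k {(pVec : k × k × W)} ↔
        ∃ (c : k) (t : W) (R : W →ₗ[k] W), c ≠ 0 ∧ IsSO BW R ∧
          g = cTilde c ∘ₗ hMap BW t R)) ∧
    (∀ (c c' : k) (t t' : W) (R R' : W →ₗ[k] W), c ≠ 0 → c' ≠ 0 →
      cTilde c ∘ₗ hMap BW t R = cTilde c' ∘ₗ hMap BW t' R' →
      c = c' ∧ t = t' ∧ R = R') ∧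
    (∀ (c c' : k) (t t' : W) (R R' : W →ₗ[k] W), c ≠ 0 → c' ≠ 0 →
      (∀ x y, BW (R x) (R y) = BW x y) →
      (cTilde c ∘ₗ hMap BW t R) ∘ₗ (cTilde c' ∘ₗ hMap BW t' R') =
        cTilde (c * c') ∘ₗ hMap BW (c'⁻¹ • t + R t') (R ∘ₗ R')) :=
  ⟨fun _ hg => map_pVec_mem_span_iff hchar hg,
    fun _ _ _ _ _ _ _ _ h => eq_of_cTilde_comp_hMap_eq BW h,
    fun c _ t t' _ R' _ hc' hR =>
      cTilde_comp_hMap_comp_cTilde_comp_hMap hchar hsymm c hc' hR t t' R'⟩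

/-- Description of the stabilizer of the line `kp` in `SO(V)`, `V = kp ⊕ kq ⊕ W`:
(i) `g ∈ SO(V)` stabilizes the line `kp` iff `g = c̃ ∘ h(t,R)` for some `c ∈ k^×`, `t ∈ W`,
`R ∈ SO(W)`, and such `(c,t,R)` is unique; (ii) the multiplication law is
`(c̃ ∘ h(t,R)) ∘ (c̃' ∘ h(t',R')) = (cc')~ ∘ h(c'⁻¹t + Rt', RR')`, so the stabilizer of the
line `kp` is isomorphic to `W ⋊ (SO(W) × k^×)`. -/
theorem stmt_14 {k W : Type*} [Field k] [AddCommGroup W] [Module k W]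
    [FiniteDimensional k W] (hchar : (2 : k) ≠ 0)
    (BW : LinearMap.BilinForm k W)
    (hsymm : ∀ x y, BW x y = BW y x)
    (hnd : ∀ x, (∀ y, BW x y = 0) → x = 0) :
    -- (i) existence: the elements of `SO(V)` stabilizing the line `kp` are exactly
    -- the products `c̃ ∘ h(t,R)`
    (∀ g : (k × k × W) →ₗ[k] (k × k × W), IsSO (Bext BW) g →
      (g pVec ∈ Submodule.span k {(pVec : k × k × W)} ↔
        ∃ (c : k) (t : W) (R : W →ₗ[k] W), c ≠ 0 ∧ IsSO BW R ∧
          g = cTilde c ∘ₗ hMap BW t R)) ∧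
    -- (i) uniqueness of `(c,t,R)`
    (∀ (c c' : k) (t t' : W) (R R' : W →ₗ[k] W), c ≠ 0 → c' ≠ 0 →
      cTilde c ∘ₗ hMap BW t R = cTilde c' ∘ₗ hMap BW t' R' →
      c = c' ∧ t = t' ∧ R = R') ∧
    -- (ii) the multiplication law
    (∀ (c c' : k) (t t' : W) (R R' : W →ₗ[k] W), c ≠ 0 → c' ≠ 0 →
      IsSO BW R → IsSO BW R' →
      (cTilde c ∘ₗ hMap BW t R) ∘ₗ (cTilde c' ∘ₗ hMap BW t' R') =
        cTilde (c * c') ∘ₗ hMap BW (c'⁻¹ • t + R t') (R ∘ₗ R')) :=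
  have ⟨stabilizer, unique, mul_law⟩ := stmt_14_general hchar BW hsymm
  ⟨stabilizer, unique, fun c c' t t' R R' hc hc' hR _ => mul_law c c' t t' R R' hc hc' hR.2.1⟩

end ConformalModel
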